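/- Coefficient form of the multiset-of-two functional equation A(z) = (B(z)² + B(z²))/2: let ℬ be a type with a size function s : ℬ → ℕ all of whose fibers are finite, and set bₙ := card {β : ℬ | s β = n}. Give Sym2 ℬ the size function sending the unordered pair {β₁,β₂} to s β₁ + s β₂; its fibers are then finite, and set aₙ := card {p : Sym2 ℬ | size p = n}. Then for every n ∈ ℕ, 2·aₙ = (∑_{i=0}^{n} b_i · b_{n−i}) + (if n is even then b_{n/2} else 0). -/

import Mathlib

/-- The size of an unordered pair: the sum of the sizes of its two components. -/
def sym2Size {ℬ : Type*} (s : ℬ → ℕ) : Sym2 ℬ → ℕ :=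
  Sym2.lift ⟨fun x y => s x + s y, fun x y => add_comm (s x) (s y)⟩

/-!
Both the ordered pairs `(x, y)` and the elements `x` of `ℬ` map to unordered pairs, by
`(x, y) ↦ s(x, y)` and `x ↦ s(x, x)`. Together these two maps hit every unordered pair exactly
twice: `s(x, y)` with `x ≠ y` comes from `(x, y)` and `(y, x)`, while `s(x, x)` comes from `(x, x)`
and from `x`. Both are compatible with sizes, so `2 * aₙ` counts the ordered pairs of total size
`n` (a convolution) together with the elements `x` such that `s x + s x = n`.
-/

open Finset

section UnorderedPairs

variable {α : Type*}

lemma setOf_uncurry_mk_eq (a b : α) :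
    {q : α × α | Sym2.mk.uncurry q = s(a, b)} = {(a, b), (b, a)} := by
  ext ⟨x, y⟩
  simp

lemma finite_setOf_uncurry_mk_eq (p : Sym2 α) : {q : α × α | Sym2.mk.uncurry q = p}.Finite := by
  induction p with
  | _ a b => simp only [setOf_uncurry_mk_eq, Set.toFinite]

lemma finite_setOf_diag_eq (p : Sym2 α) : {x : α | Sym2.diag x = p}.Finite :=
  (Set.finite_singleton p).preimage Sym2.diag_injective.injOn

lemma card_uncurry_mk_fiber_add_card_diag_fiber (p : Sym2 α) :
    Nat.card {q : α × α // Sym2.mk.uncurry q = p} + Nat.card {x : α // Sym2.diag x = p} = 2 := by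
  induction p with
  | _ a b =>
    change Set.ncard {q : α × α | Sym2.mk.uncurry q = s(a, b)} +
      Set.ncard {x : α | Sym2.diag x = s(a, b)} = 2
    rw [setOf_uncurry_mk_eq]
    rcases eq_or_ne a b with rfl | hab
    · have diag_fiber : {x : α | Sym2.diag x = s(a, a)} = {a} :=
        Set.ext fun x => Sym2.diag_injective.eq_iff
      simp [diag_fiber]
    · have diag_fiber : {x : α | Sym2.diag x = s(a, b)} = ∅ :=
        Set.eq_empty_of_forall_notMem fun x hx =>
          hab (Sym2.mk_isDiag_iff.mp (hx ▸ Sym2.diag_isDiag x))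
      have pair_ne_swap : (a, b) ≠ (b, a) := fun h => hab (congrArg Prod.fst h)
      rw [diag_fiber, Set.ncard_pair pair_ne_swap, Set.ncard_empty]

lemma two_mul_card_eq_card_preimage_mk_add_card_preimage_diag (P : Finset (Sym2 α)) :
    2 * #P = Nat.card (Sym2.mk.uncurry ⁻¹' (P : Set (Sym2 α))) +
      Nat.card (Sym2.diag ⁻¹' (P : Set (Sym2 α))) := by
  rw [card_preimage_eq_sum_card_image_eq fun p _ => finite_setOf_uncurry_mk_eq p,
    card_preimage_eq_sum_card_image_eq fun p _ => finite_setOf_diag_eq p, ← sum_add_distrib,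
    sum_congr rfl fun p _ => card_uncurry_mk_fiber_add_card_diag_fiber p, sum_const, smul_eq_mul,
    mul_comm]

end UnorderedPairs

section OrderedPairs

variable {α β M : Type*} {f : α → M} {g : β → M}

lemma finite_setOf_prodMap_eq (hf : ∀ i, {x | f x = i}.Finite) (hg : ∀ j, {y | g y = j}.Finite)
    (ij : M × M) : {q | Prod.map f g q = ij}.Finite :=
  ((hf ij.1).prod (hg ij.2)).subset fun _ hq => Prod.ext_iff.mp hq

lemma card_prodMap_fiber (f : α → M) (g : β → M) (ij : M × M) :
    Nat.card {q // Prod.map f g q = ij} =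
      Nat.card {x // f x = ij.1} * Nat.card {y // g y = ij.2} := by
  rw [← Nat.card_prod]
  exact Nat.card_congr ((Equiv.subtypeEquivRight fun _ => Prod.ext_iff).trans
    (Equiv.subtypeProdEquivProd (p := (f · = ij.1)) (q := (g · = ij.2))))

variable [AddMonoid M] [HasAntidiagonal M]

lemma preimage_prodMap_antidiagonal (f : α → M) (g : β → M) (n : M) :
    Prod.map f g ⁻¹' (antidiagonal n : Set (M × M)) = {q | f q.1 + g q.2 = n} := by
  ext q
  simp

lemma finite_setOf_add_eq (hf : ∀ i, {x | f x = i}.Finite) (hg : ∀ j, {y | g y = j}.Finite)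
    (n : M) : {q : α × β | f q.1 + g q.2 = n}.Finite := by
  rw [← preimage_prodMap_antidiagonal]
  exact (finite_toSet _).preimage' fun ij _ => finite_setOf_prodMap_eq hf hg ij

lemma card_add_eq_sum_antidiagonal (hf : ∀ i, {x | f x = i}.Finite)
    (hg : ∀ j, {y | g y = j}.Finite) (n : M) :
    Nat.card {q : α × β // f q.1 + g q.2 = n} =
      ∑ ij ∈ antidiagonal n, Nat.card {x // f x = ij.1} * Nat.card {y // g y = ij.2} := by
  calc Nat.card {q : α × β // f q.1 + g q.2 = n}
      = Nat.card (Prod.map f g ⁻¹' (antidiagonal n : Set (M × M))) := by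
        rw [preimage_prodMap_antidiagonal, Set.coe_ofPred]
    _ = ∑ ij ∈ antidiagonal n, Nat.card {q // Prod.map f g q = ij} :=
        card_preimage_eq_sum_card_image_eq fun ij _ => finite_setOf_prodMap_eq hf hg ij
    _ = ∑ ij ∈ antidiagonal n, Nat.card {x // f x = ij.1} * Nat.card {y // g y = ij.2} :=
        sum_congr rfl fun ij _ => card_prodMap_fiber f g ij

end OrderedPairs

section Sizes

variable {ℬ : Type*} {s : ℬ → ℕ}

lemma card_add_self_eq (s : ℬ → ℕ) (n : ℕ) :
    Nat.card {x // s x + s x = n} = if Even n then Nat.card {x // s x = n / 2} else 0 := by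
  split_ifs with hn
  · have add_self_eq_iff (x : ℬ) : s x + s x = n ↔ s x = n / 2 := by grind
    simp only [add_self_eq_iff]
  · have : IsEmpty {x // s x + s x = n} := ⟨fun x => hn ⟨s x, x.2.symm⟩⟩
    exact Nat.card_of_isEmpty

lemma finite_setOf_sym2Size_eq (hs : ∀ n, {x | s x = n}.Finite) (n : ℕ) :
    {p | sym2Size s p = n}.Finite :=
  Set.Finite.of_preimage (f := Sym2.mk.uncurry) (finite_setOf_add_eq hs hs n) Sym2.mk_surjective

lemma two_mul_card_sym2Size_eq (hs : ∀ n, {x | s x = n}.Finite) (n : ℕ) :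
    2 * Nat.card {p // sym2Size s p = n} =
      Nat.card {q : ℬ × ℬ // s q.1 + s q.2 = n} + Nat.card {x // s x + s x = n} := by
  obtain ⟨P, hP⟩ := (finite_setOf_sym2Size_eq hs n).exists_finset_coe
  have key := two_mul_card_eq_card_preimage_mk_add_card_preimage_diag P
  rwa [← Set.ncard_coe_finset, hP] at key

end Sizes

/-- **Coefficient form of `A(z) = (B(z)² + B(z²))/2` for `MSet₂`.**
If `s : ℬ → ℕ` has finite fibers and `bₙ` counts elements of size `n`, then the fibers
of the induced size on `Sym2 ℬ` are finite and, writing `aₙ` for the number of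
unordered pairs of total size `n`,
`2·aₙ = (∑_{i=0}^{n} b_i b_{n−i}) + (if n even then b_{n/2} else 0)`. -/
theorem msets2_coefficient_identity
    {ℬ : Type*} (s : ℬ → ℕ) (hfin : ∀ n : ℕ, {β : ℬ | s β = n}.Finite) :
    (∀ n : ℕ, {p : Sym2 ℬ | sym2Size s p = n}.Finite) ∧
      ∀ n : ℕ,
        2 * Nat.card {p : Sym2 ℬ // sym2Size s p = n} =
          (∑ i ∈ Finset.range (n + 1),
            Nat.card {β : ℬ // s β = i} * Nat.card {β : ℬ // s β = n - i}) +
          (if Even n then Nat.card {β : ℬ // s β = n / 2} else 0) := by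
  refine ⟨finite_setOf_sym2Size_eq hfin, fun n => ?_⟩
  rw [two_mul_card_sym2Size_eq hfin, card_add_self_eq, card_add_eq_sum_antidiagonal hfin hfin,
    Finset.Nat.sum_antidiagonal_eq_sum_range_succ_mk]
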